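/- arXiv:2012.10424 — 5 statements merged into one kernel-verified Lean document; each statement's English description precedes it below -/
import Mathlib

section
/- Let d, p, C be positive integers with p ≤ d, let Σ_W ∈ ℝ^{d×d} be symmetric positive definite, let μ_1, …, μ_C ∈ ℝ^d, and let A ∈ ℝ^{p×d} be a surjective matrix (rank p). Then A Σ_W Aᵀ is symmetric positive definite, and the Fisher discriminant ratio decreases under A: (1/C) ∑_{c=1}^C (A μ_c)ᵀ (A Σ_W Aᵀ)⁻¹ (A μ_c) ≤ (1/C) ∑_{c=1}^C μ_cᵀ Σ_W⁻¹ μ_c. -/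
open Matrix

/-! With `T = A S Aᴴ`, the block matrix `[T, A; Aᴴ, S⁻¹]` factors as `[A; S⁻¹] S [A; S⁻¹]ᴴ`, so it
is positive semidefinite. So is then the Schur complement `S⁻¹ - Aᴴ T⁻¹ A` of `T`, and its quadratic
form at a class mean is the loss in the Fisher discriminant ratio contributed by that class. -/

section

variable {m n : Type*} [Fintype n]

lemma vecMul_injective_of_mulVec_surjective {R : Type*} [Semiring R] [Fintype m]
    {A : Matrix m n R} (hA : Function.Surjective A.mulVec) : Function.Injective A.vecMul := by
  classical
  obtain ⟨B, hAB⟩ := mulVec_surjective_iff_exists_right_inverse.mp hA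
  refine Function.LeftInverse.injective (g := B.vecMul) fun x ↦ ?_
  calc (x ᵥ* A) ᵥ* B = x ᵥ* (A * B) := vecMul_vecMul x A B
    _ = x := by rw [hAB, vecMul_one]

variable {K : Type*} [Field K] [PartialOrder K] [StarRing K]
variable {S : Matrix n n K} {A : Matrix m n K}

lemma posDef_mul_mul_conjTranspose_of_mulVec_surjective [Finite m]
    (hS : S.PosDef) (hA : Function.Surjective A.mulVec) : (A * S * Aᴴ).PosDef := by
  have := Fintype.ofFinite m
  exact hS.mul_mul_conjTranspose_same (vecMul_injective_of_mulVec_surjective hA)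

lemma posSemidef_fromBlocks_mul_mul_conjTranspose_inv [Finite m] [DecidableEq n]
    (hS : S.PosDef) (A : Matrix m n K) : (fromBlocks (A * S * Aᴴ) A Aᴴ S⁻¹).PosSemidef := by
  have hdet : IsUnit S.det := (isUnit_iff_isUnit_det S).mp hS.isUnit
  have factorization : fromRows A S⁻¹ * S * (fromRows A S⁻¹)ᴴ =
      fromBlocks (A * S * Aᴴ) A Aᴴ S⁻¹ := by
    rw [conjTranspose_fromRows_eq_fromCols_conjTranspose, hS.isHermitian.inv.eq, fromRows_mul,
      fromRows_mul_fromCols, mul_nonsing_inv_cancel_right _ _ hdet, nonsing_inv_mul _ hdet,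
      Matrix.one_mul, Matrix.one_mul]
  exact factorization ▸ hS.posSemidef.mul_mul_conjTranspose_same (fromRows A S⁻¹)

variable [StarOrderedRing K] [Fintype m] [DecidableEq m] [DecidableEq n]

lemma posSemidef_inv_sub_conjTranspose_mul_inv_mul
    (hS : S.PosDef) (hA : Function.Surjective A.mulVec) :
    (S⁻¹ - Aᴴ * (A * S * Aᴴ)⁻¹ * A).PosSemidef := by
  have hT := posDef_mul_mul_conjTranspose_of_mulVec_surjective hS hA
  let _ := hT.isUnit.invertible
  exact (hT.fromBlocks₁₁ A S⁻¹).mp (posSemidef_fromBlocks_mul_mul_conjTranspose_inv hS A)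

lemma star_mulVec_dotProduct_inv_mulVec_mulVec_le
    (hS : S.PosDef) (hA : Function.Surjective A.mulVec) (x : n → K) :
    star (A *ᵥ x) ⬝ᵥ (A * S * Aᴴ)⁻¹ *ᵥ (A *ᵥ x) ≤ star x ⬝ᵥ S⁻¹ *ᵥ x := by
  have h := (posSemidef_inv_sub_conjTranspose_mul_inv_mul hS hA).dotProduct_mulVec_nonneg x
  rw [sub_mulVec, dotProduct_sub, sub_nonneg] at h
  calc star (A *ᵥ x) ⬝ᵥ (A * S * Aᴴ)⁻¹ *ᵥ (A *ᵥ x)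
      = star x ⬝ᵥ (Aᴴ * (A * S * Aᴴ)⁻¹ * A) *ᵥ x := by
        rw [star_mulVec, ← dotProduct_mulVec, mulVec_mulVec, mulVec_mulVec]
    _ ≤ star x ⬝ᵥ S⁻¹ *ᵥ x := h

theorem fisher_ratio_decreases_under_linear_map_general {ι : Type*} [Fintype ι]
    (hS : S.PosDef) {w : ι → K} (hw : ∀ c, 0 ≤ w c) (μ : ι → n → K)
    (hA : Function.Surjective A.mulVec) :
    (A * S * Aᴴ).PosDef ∧
      ∑ c, w c * (star (A *ᵥ μ c) ⬝ᵥ (A * S * Aᴴ)⁻¹ *ᵥ (A *ᵥ μ c)) ≤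
        ∑ c, w c * (star (μ c) ⬝ᵥ S⁻¹ *ᵥ μ c) := by
  refine ⟨posDef_mul_mul_conjTranspose_of_mulVec_surjective hS hA, ?_⟩
  gcongr with c
  · exact hw c
  · exact star_mulVec_dotProduct_inv_mulVec_mulVec_le hS hA (μ c)

end

/-- For a positive definite within-class covariance `Sw`, class means `μ c`,
and a surjective matrix `A : ℝ^{p×d}` (rank `p`), the matrix `A Sw Aᵀ` is positive definite
and the Fisher discriminant ratio decreases under `A`. -/
theorem fisher_ratio_decreases_under_linear_map
    (d p C : ℕ) (hd : 0 < d) (hp : 0 < p) (hC : 0 < C) (hpd : p ≤ d)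
    (Sw : Matrix (Fin d) (Fin d) ℝ) (hSw : Sw.PosDef)
    (μ : Fin C → Fin d → ℝ)
    (A : Matrix (Fin p) (Fin d) ℝ) (hA : Function.Surjective A.mulVec) :
    (A * Sw * Aᵀ).PosDef ∧
      (1 / C : ℝ) * ∑ c, A.mulVec (μ c) ⬝ᵥ ((A * Sw * Aᵀ)⁻¹).mulVec (A.mulVec (μ c)) ≤
        (1 / C : ℝ) * ∑ c, μ c ⬝ᵥ (Sw⁻¹).mulVec (μ c) := by
  simpa only [Finset.mul_sum, conjTranspose_eq_transpose_of_trivial, star_trivial] using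
    fisher_ratio_decreases_under_linear_map_general hSw (w := fun _ ↦ 1 / (C : ℝ))
      (fun _ ↦ by positivity) μ hA
end

section
/- Let s > 1/2 and C₁, C₂ > 0. There exists a constant K > 0, depending only on s, C₁ and C₂, such that for every integer d ≥ 4, every σ with 0 < σ ≤ C₁, and every μ ∈ ℝ^d whose sorted coefficients satisfy C₁ r^{−s} ≤ |μ^{(r)}| ≤ C₂ r^{−s} for all 1 ≤ r ≤ d, if x is a random vector distributed as N(μ, σ² I_d) and ρ_t is the soft-thresholding with threshold λ = σ √(2 log d), then E[‖ρ_t(x) − μ‖²] ≤ K σ^{2 − 1/s} log d. -/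
open MeasureTheory ProbabilityTheory

/-- The Gaussian measure `N(m, σ² I_d)` on `ℝ^d`, as a product of one-dimensional
Gaussian measures. -/
noncomputable def gaussPi (d : ℕ) (m : Fin d → ℝ) (σ : ℝ) : Measure (Fin d → ℝ) :=
  Measure.pi fun i => gaussianReal (m i) (Real.toNNReal (σ ^ 2))

/-- Soft-thresholding with threshold `lam`: `ρ_t(u) = sign(u) · max(|u| − lam, 0)`. -/
noncomputable def softThresh (lam u : ℝ) : ℝ :=
  Real.sign u * max (|u| - lam) 0

/-- `z` has sorted coefficients (by decreasing absolute value) satisfying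
`c₁ r^{−s} ≤ |z^{(r)}| ≤ c₂ r^{−s}` for all `1 ≤ r ≤ d` (here ranks are `0`-indexed,
so rank `r : Fin d` corresponds to `r + 1`). -/
def sortedDecay (s c₁ c₂ : ℝ) {d : ℕ} (z : Fin d → ℝ) : Prop :=
  ∃ e : Equiv.Perm (Fin d),
    (∀ r r' : Fin d, r ≤ r' → |z (e r')| ≤ |z (e r)|) ∧
    ∀ r : Fin d, c₁ * ((r : ℝ) + 1) ^ (-s) ≤ |z (e r)| ∧ |z (e r)| ≤ c₂ * ((r : ℝ) + 1) ^ (-s)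

/-!
Write `λ` for the threshold and `z = x - μ`. In each coordinate
`|ρ_t(x) - μ| ≤ λ + |z|` and `|ρ_t(x) - μ| ≤ |μ| + |ρ_t(z)|`. For `λ = σ √(2 log d)` the Gaussian tail
makes `E[ρ_t(z)²]` at most `2 σ² / (d log d)`, so a coordinate contributes
`O(log d) (min(σ², μ²) + σ² / d)`. Summing gives the oracle inequality
`E[‖ρ_t(x) - μ‖²] ≤ 16 log d (σ² + ∑ᵢ min(σ², μᵢ²))`. The decay of `μ` then reduces everything to
`∑ᵣ min(σ², r^(-2s)) = O(σ^(2 - 1/s))`: about `σ^(-1/s)` terms equal `σ²`, and the remaining ones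
sum to the same order by comparison with an integral.
-/

section SoftThreshold

variable {l : ℝ}

lemma softThresh_eq_max_sub_max (hl : 0 ≤ l) (u : ℝ) :
    softThresh l u = max (u - l) 0 - max (-u - l) 0 := by
  unfold softThresh
  rcases lt_trichotomy u 0 with hu | rfl | hu
  · rw [Real.sign_of_neg hu, abs_of_neg hu, max_eq_right (by linarith : u - l ≤ 0)]
    ring
  · simp
  · rw [Real.sign_of_pos hu, abs_of_pos hu, max_eq_right (by linarith : -u - l ≤ 0)]
    ring

lemma continuous_softThresh (hl : 0 ≤ l) : Continuous (softThresh l) := by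
  rw [funext (softThresh_eq_max_sub_max hl)]
  fun_prop

lemma abs_softThresh (hl : 0 ≤ l) (u : ℝ) : |softThresh l u| = max (|u| - l) 0 := by
  rw [softThresh_eq_max_sub_max hl]
  grind

lemma abs_softThresh_sub_self_le (hl : 0 ≤ l) (u : ℝ) : |softThresh l u - u| ≤ l := by
  rw [softThresh_eq_max_sub_max hl]
  grind

lemma abs_softThresh_sub_le (hl : 0 ≤ l) (u m : ℝ) :
    |softThresh l u - m| ≤ |m| + |softThresh l (u - m)| := by
  rw [abs_softThresh hl, softThresh_eq_max_sub_max hl]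
  grind

lemma sq_softThresh_sub_le_threshold_add_noise (hl : 0 ≤ l) (u m : ℝ) :
    (softThresh l u - m) ^ 2 ≤ 2 * l ^ 2 + 2 * (u - m) ^ 2 :=
  calc (softThresh l u - m) ^ 2 = ((softThresh l u - u) + (u - m)) ^ 2 := by ring
    _ ≤ 2 * ((softThresh l u - u) ^ 2 + (u - m) ^ 2) := add_sq_le
    _ ≤ 2 * (l ^ 2 + (u - m) ^ 2) := by
        gcongr 2 * (?_ + _)
        exact sq_le_sq.2 ((abs_softThresh_sub_self_le hl u).trans (le_abs_self l))
    _ = 2 * l ^ 2 + 2 * (u - m) ^ 2 := by ring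

lemma sq_softThresh_sub_le_signal_add_centered (hl : 0 ≤ l) (u m : ℝ) :
    (softThresh l u - m) ^ 2 ≤ 2 * m ^ 2 + 2 * softThresh l (u - m) ^ 2 :=
  calc (softThresh l u - m) ^ 2 = |softThresh l u - m| ^ 2 := (sq_abs _).symm
    _ ≤ (|m| + |softThresh l (u - m)|) ^ 2 := by gcongr; exact abs_softThresh_sub_le hl u m
    _ ≤ 2 * (|m| ^ 2 + |softThresh l (u - m)| ^ 2) := add_sq_le
    _ = 2 * m ^ 2 + 2 * softThresh l (u - m) ^ 2 := by rw [sq_abs, sq_abs]; ring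

lemma sq_softThresh_le_exp {a : ℝ} (hl : 0 ≤ l) (ha : 0 < a) (u : ℝ) :
    softThresh l u ^ 2 ≤
      2 / a ^ 2 * Real.exp (-(a * l)) * (Real.exp (a * u) + Real.exp (-a * u)) := by
  rw [← sq_abs, abs_softThresh hl]
  set w := max (|u| - l) 0
  have hw : 0 ≤ w := le_max_right _ _
  rcases hw.eq_or_lt with hw0 | hw0
  · rw [← hw0, zero_pow two_ne_zero]
    positivity
  have hwu : w = |u| - l := max_eq_left (lt_max_iff.1 hw0 |>.resolve_right (lt_irrefl 0)).le
  calc w ^ 2 = 2 / a ^ 2 * ((a * w) ^ 2 / 2) := by field_simp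
    _ ≤ 2 / a ^ 2 * Real.exp (a * w) := by
        gcongr
        linarith [Real.quadratic_le_exp_of_nonneg (mul_nonneg ha.le hw), mul_nonneg ha.le hw]
    _ = 2 / a ^ 2 * (Real.exp (-(a * l)) * Real.exp |a * u|) := by
        rw [← Real.exp_add, hwu, abs_mul, abs_of_pos ha]
        ring_nf
    _ ≤ 2 / a ^ 2 * (Real.exp (-(a * l)) * (Real.exp (a * u) + Real.exp (-a * u))) := by
        gcongr
        rw [neg_mul]
        exact Real.exp_abs_le _
    _ = _ := by ring

end SoftThreshold

section GaussianRisk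

variable {l : ℝ}

lemma memLp_softThresh {P : Measure ℝ} [IsFiniteMeasure P] (hl : 0 ≤ l) (hP : MemLp id 2 P) :
    MemLp (softThresh l) 2 P := by
  have hbias : MemLp (fun x => softThresh l x - x) 2 P :=
    .of_bound ((continuous_softThresh hl).sub continuous_id).aestronglyMeasurable l
      (ae_of_all _ (abs_softThresh_sub_self_le hl))
  exact (hbias.add hP).ae_eq (ae_of_all _ fun x => sub_add_cancel (softThresh l x) x)

lemma integrable_sq_softThresh_sub {P : Measure ℝ} [IsFiniteMeasure P] (hl : 0 ≤ l)
    (hP : MemLp id 2 P) (m : ℝ) : Integrable (fun x => (softThresh l x - m) ^ 2) P :=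
  ((memLp_softThresh hl hP).sub (memLp_const m)).integrable_sq

lemma integral_sq_softThresh_sub_le_threshold_add_variance (hl : 0 ≤ l) (m : ℝ) (v : NNReal) :
    ∫ x, (softThresh l x - m) ^ 2 ∂gaussianReal m v ≤ 2 * l ^ 2 + 2 * v := by
  have hint : Integrable (fun x => (x - m) ^ 2) (gaussianReal m v) :=
    ((memLp_id_gaussianReal 2).sub (memLp_const m)).integrable_sq
  have hvar : ∫ x, (x - m) ^ 2 ∂gaussianReal m v = v := by
    simpa [variance_eq_integral aemeasurable_id', integral_id_gaussianReal]
      using variance_fun_id_gaussianReal (μ := m) (v := v)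
  calc ∫ x, (softThresh l x - m) ^ 2 ∂gaussianReal m v
      ≤ ∫ x, (2 * l ^ 2 + 2 * (x - m) ^ 2) ∂gaussianReal m v :=
        integral_mono (integrable_sq_softThresh_sub hl (memLp_id_gaussianReal 2) m)
          ((integrable_const _).add (hint.const_mul 2))
          fun x => sq_softThresh_sub_le_threshold_add_noise hl x m
    _ = 2 * l ^ 2 + 2 * v := by
        rw [integral_add (integrable_const _) (hint.const_mul 2),
          integral_const_mul _ fun x => (x - m) ^ 2, hvar, integral_const, probReal_univ, one_smul]

lemma integral_sq_softThresh_sub_le_signal_add_centered (hl : 0 ≤ l) (m : ℝ) (v : NNReal) :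
    ∫ x, (softThresh l x - m) ^ 2 ∂gaussianReal m v ≤
      2 * m ^ 2 + 2 * ∫ z, softThresh l z ^ 2 ∂gaussianReal 0 v := by
  have hcenter : (gaussianReal m v).map (· - m) = gaussianReal 0 v := by
    rw [gaussianReal_map_sub_const, sub_self]
  have hmeas : AEMeasurable (· - m) (gaussianReal m v) := by fun_prop
  have hint : Integrable (fun z => softThresh l z ^ 2) (gaussianReal 0 v) :=
    (memLp_softThresh hl (memLp_id_gaussianReal 2)).integrable_sq
  have hint' : Integrable (fun x => softThresh l (x - m) ^ 2) (gaussianReal m v) :=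
    (hcenter ▸ hint).comp_aemeasurable hmeas
  calc ∫ x, (softThresh l x - m) ^ 2 ∂gaussianReal m v
      ≤ ∫ x, (2 * m ^ 2 + 2 * softThresh l (x - m) ^ 2) ∂gaussianReal m v :=
        integral_mono (integrable_sq_softThresh_sub hl (memLp_id_gaussianReal 2) m)
          ((integrable_const _).add (hint'.const_mul 2))
          fun x => sq_softThresh_sub_le_signal_add_centered hl x m
    _ = 2 * m ^ 2 + 2 * ∫ x, softThresh l (x - m) ^ 2 ∂gaussianReal m v := by
        rw [integral_add (integrable_const _) (hint'.const_mul 2),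
          integral_const_mul _ fun x => softThresh l (x - m) ^ 2, integral_const, probReal_univ,
          one_smul]
    _ = 2 * m ^ 2 + 2 * ∫ z, softThresh l z ^ 2 ∂gaussianReal 0 v := by
        rw [← hcenter, integral_map hmeas (hcenter.symm ▸ hint.aestronglyMeasurable)]

lemma integral_sq_softThresh_gaussianReal_zero_le {v : NNReal} (hl : 0 < l) (hv : v ≠ 0) :
    ∫ z, softThresh l z ^ 2 ∂gaussianReal 0 v ≤
      4 * v ^ 2 / l ^ 2 * Real.exp (-(l ^ 2 / (2 * v))) := by
  have hv0 : (v : ℝ) ≠ 0 := NNReal.coe_ne_zero.2 hv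
  have hexp (a : ℝ) : ∫ z, Real.exp (a * z) ∂gaussianReal 0 v = Real.exp (v * a ^ 2 / 2) := by
    simpa [mgf] using congrFun (mgf_fun_id_gaussianReal (μ := 0) (v := v)) a
  -- This `a` minimises the exponent `v a² / 2 - a l` of the exponential moment bound.
  set a : ℝ := l / v with ha
  have ha0 : 0 < a := by positivity
  have hint (b : ℝ) : Integrable (fun z => Real.exp (b * z)) (gaussianReal 0 v) :=
    integrable_exp_mul_gaussianReal b
  calc ∫ z, softThresh l z ^ 2 ∂gaussianReal 0 v
      ≤ ∫ z, 2 / a ^ 2 * Real.exp (-(a * l)) * (Real.exp (a * z) + Real.exp (-a * z))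
          ∂gaussianReal 0 v :=
        integral_mono (memLp_softThresh hl.le (memLp_id_gaussianReal 2)).integrable_sq
          (((hint a).add (hint (-a))).const_mul _) (sq_softThresh_le_exp hl.le ha0)
    _ = 4 / a ^ 2 * (Real.exp (-(a * l)) * Real.exp (v * a ^ 2 / 2)) := by
        rw [integral_const_mul, integral_add (hint a) (hint (-a)), hexp, hexp, neg_sq]
        ring
    _ = 4 * v ^ 2 / l ^ 2 * Real.exp (-(l ^ 2 / (2 * v))) := by
        have hexponent : -(a * l) + v * a ^ 2 / 2 = -(l ^ 2 / (2 * v)) := by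
          rw [ha]
          field_simp
          ring
        rw [← Real.exp_add, hexponent, ha, div_pow, div_div_eq_mul_div]

lemma sq_mul_sqrt_two_mul {L : ℝ} (hL : 0 ≤ L) (σ : ℝ) :
    (σ * √(2 * L)) ^ 2 = 2 * L * σ ^ 2 := by
  rw [mul_pow, Real.sq_sqrt (by positivity), mul_comm]

lemma integral_sq_softThresh_sqrt_gaussianReal_zero_le {σ L : ℝ} (hσ : 0 < σ) (hL : 0 < L) :
    ∫ z, softThresh (σ * √(2 * L)) z ^ 2 ∂gaussianReal 0 (σ ^ 2).toNNReal ≤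
      2 * σ ^ 2 / L * Real.exp (-L) := by
  have hσ2 : 0 < σ ^ 2 := by positivity
  convert integral_sq_softThresh_gaussianReal_zero_le (l := σ * √(2 * L)) (by positivity)
    (Real.toNNReal_pos.2 hσ2).ne' using 1
  rw [sq_mul_sqrt_two_mul hL.le, Real.coe_toNNReal _ hσ2.le]
  have hexponent : 2 * L * σ ^ 2 / (2 * σ ^ 2) = L := by field_simp
  rw [hexponent]
  field_simp
  ring

lemma integral_sq_softThresh_sub_le_min {σ L : ℝ} (hσ : 0 < σ) (hL : 1 / 2 ≤ L) (m : ℝ) :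
    ∫ x, (softThresh (σ * √(2 * L)) x - m) ^ 2 ∂gaussianReal m (σ ^ 2).toNNReal ≤
      16 * L * (σ ^ 2 * Real.exp (-L) + min (σ ^ 2) (m ^ 2)) := by
  have hL0 : 0 < L := by linarith
  have hl : 0 ≤ σ * √(2 * L) := by positivity
  have hnoise : 0 ≤ L * (σ ^ 2 * Real.exp (-L)) := by positivity
  rw [← min_add_add_left, mul_min_of_nonneg _ _ (by positivity)]
  refine le_min ?_ ?_
  · calc ∫ x, (softThresh (σ * √(2 * L)) x - m) ^ 2 ∂gaussianReal m (σ ^ 2).toNNReal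
        ≤ 2 * (σ * √(2 * L)) ^ 2 + 2 * (σ ^ 2).toNNReal :=
          integral_sq_softThresh_sub_le_threshold_add_variance hl m _
      _ = (4 * L + 2) * σ ^ 2 := by
          rw [sq_mul_sqrt_two_mul hL0.le, Real.coe_toNNReal _ (sq_nonneg σ)]
          ring
      _ ≤ 16 * L * σ ^ 2 := by gcongr; linarith
      _ ≤ 16 * L * (σ ^ 2 * Real.exp (-L) + σ ^ 2) := by linarith
  · have hcoeff : 2 * σ ^ 2 / L ≤ 8 * L * σ ^ 2 := by
      rw [div_le_iff₀ hL0]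
      nlinarith [mul_le_mul_of_nonneg_right (by nlinarith : 1 ≤ 4 * L ^ 2) (sq_nonneg σ)]
    calc ∫ x, (softThresh (σ * √(2 * L)) x - m) ^ 2 ∂gaussianReal m (σ ^ 2).toNNReal
        ≤ 2 * m ^ 2 + 2 * ∫ z, softThresh (σ * √(2 * L)) z ^ 2
            ∂gaussianReal 0 (σ ^ 2).toNNReal :=
          integral_sq_softThresh_sub_le_signal_add_centered hl m _
      _ ≤ 2 * m ^ 2 + 2 * (2 * σ ^ 2 / L * Real.exp (-L)) := by
          gcongr
          exact integral_sq_softThresh_sqrt_gaussianReal_zero_le hσ hL0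
      _ ≤ (16 * L) * m ^ 2 + 2 * (8 * L * σ ^ 2 * Real.exp (-L)) := by
          gcongr
          linarith
      _ = 16 * L * (σ ^ 2 * Real.exp (-L) + m ^ 2) := by ring

lemma integral_sum_comp_gaussPi {d : ℕ} {m : Fin d → ℝ} {σ : ℝ} {f : Fin d → ℝ → ℝ}
    (hf : ∀ i, Integrable (f i) (gaussianReal (m i) (σ ^ 2).toNNReal)) :
    ∫ x, ∑ i, f i (x i) ∂gaussPi d m σ =
      ∑ i, ∫ x, f i x ∂gaussianReal (m i) (σ ^ 2).toNNReal := by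
  unfold gaussPi
  rw [integral_finsetSum _ fun i _ => integrable_comp_eval (hf i)]
  exact Finset.sum_congr rfl fun i _ => integral_comp_eval (hf i).aestronglyMeasurable

theorem softThresh_oracle_inequality {d : ℕ} (hd : 2 ≤ d) {σ : ℝ} (hσ : 0 < σ) (μ : Fin d → ℝ) :
    ∫ x, ∑ i, (softThresh (σ * √(2 * Real.log d)) (x i) - μ i) ^ 2 ∂gaussPi d μ σ ≤
      16 * Real.log d * (σ ^ 2 + ∑ i, min (σ ^ 2) (μ i ^ 2)) := by
  have hd2 : (2 : ℝ) ≤ d := by exact_mod_cast hd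
  have hlog : 1 / 2 ≤ Real.log d :=
    calc (1 / 2 : ℝ) ≤ Real.log 2 := by linarith [Real.log_two_gt_d9]
      _ ≤ Real.log d := Real.log_le_log two_pos hd2
  have hexp : (d : ℝ) * Real.exp (-Real.log d) = 1 := by
    rw [Real.exp_neg, Real.exp_log (by linarith), mul_inv_cancel₀ (by linarith)]
  rw [integral_sum_comp_gaussPi fun i =>
    integrable_sq_softThresh_sub (by positivity) (memLp_id_gaussianReal 2) (μ i)]
  calc ∑ i, ∫ x, (softThresh (σ * √(2 * Real.log d)) x - μ i) ^ 2
        ∂gaussianReal (μ i) (σ ^ 2).toNNReal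
      ≤ ∑ i, 16 * Real.log d * (σ ^ 2 * Real.exp (-Real.log d) + min (σ ^ 2) (μ i ^ 2)) :=
        Finset.sum_le_sum fun i _ => integral_sq_softThresh_sub_le_min hσ hlog (μ i)
    _ = 16 * Real.log d * (σ ^ 2 * (d * Real.exp (-Real.log d)) + ∑ i, min (σ ^ 2) (μ i ^ 2)) := by
        rw [← Finset.mul_sum, Finset.sum_add_distrib, Finset.sum_const, Finset.card_univ,
          Fintype.card_fin, nsmul_eq_mul]
        ring
    _ = 16 * Real.log d * (σ ^ 2 + ∑ i, min (σ ^ 2) (μ i ^ 2)) := by rw [hexp, mul_one]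

end GaussianRisk

section TruncatedPowerSum

open Set

variable {p : ℝ}

lemma antitone_max_rpow_neg {a : ℝ} (hp : 0 ≤ p) (ha : 0 < a) :
    Antitone fun x : ℝ => max x a ^ (-p) := fun _ _ hxy =>
  Real.rpow_le_rpow_of_nonpos (lt_max_of_lt_right ha) (max_le_max_right a hxy) (neg_nonpos.2 hp)

lemma integrableOn_Ioc_max_rpow_neg (a p : ℝ) :
    IntegrableOn (fun x : ℝ => max x a ^ (-p)) (Ioc 0 a) :=
  (integrableOn_const (C := a ^ (-p)) (by simp)).congr_fun
    (fun x hx => by simp only [max_eq_right hx.2]) measurableSet_Ioc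

lemma integrableOn_Ioi_max_rpow_neg {a : ℝ} (hp : 1 < p) (ha : 0 < a) :
    IntegrableOn (fun x : ℝ => max x a ^ (-p)) (Ioi a) :=
  (integrableOn_Ioi_rpow_of_lt (neg_lt_neg hp) ha).congr_fun
    (fun x hx => by simp only [max_eq_left (mem_Ioi.1 hx).le]) measurableSet_Ioi

lemma integrableOn_Ioi_zero_max_rpow_neg {a : ℝ} (hp : 1 < p) (ha : 0 < a) :
    IntegrableOn (fun x : ℝ => max x a ^ (-p)) (Ioi 0) := by
  rw [← Ioc_union_Ioi_eq_Ioi ha.le]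
  exact (integrableOn_Ioc_max_rpow_neg a p).union (integrableOn_Ioi_max_rpow_neg hp ha)

lemma integral_Ioi_zero_max_rpow_neg {a : ℝ} (hp : 1 < p) (ha : 0 < a) :
    ∫ x in Ioi 0, max x a ^ (-p) = p / (p - 1) * a ^ (1 - p) := by
  have hp1 : p - 1 ≠ 0 := by linarith
  have hpow : a ^ (1 - p) = a * a ^ (-p) := by
    rw [sub_eq_add_neg, Real.rpow_add ha, Real.rpow_one]
  have hflat : ∫ x in Ioc 0 a, max x a ^ (-p) = a ^ (1 - p) := by
    rw [setIntegral_congr_fun (g := fun _ => a ^ (-p)) measurableSet_Ioc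
      fun x hx => by simp only [max_eq_right hx.2], hpow]
    simp [ha.le]
  have htail : ∫ x in Ioi a, max x a ^ (-p) = a ^ (1 - p) / (p - 1) := by
    rw [setIntegral_congr_fun (g := fun x => x ^ (-p)) measurableSet_Ioi
      fun x hx => by simp only [max_eq_left (mem_Ioi.1 hx).le],
      integral_Ioi_rpow_of_lt (by linarith) ha, neg_div, ← div_neg]
    ring_nf
  rw [← Ioc_union_Ioi_eq_Ioi ha.le, setIntegral_union (Ioc_disjoint_Ioi le_rfl) measurableSet_Ioi
    (integrableOn_Ioc_max_rpow_neg a p) (integrableOn_Ioi_max_rpow_neg hp ha), hflat, htail]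
  field_simp
  ring

lemma sum_range_max_rpow_neg_le {a : ℝ} (hp : 1 < p) (ha : 0 < a) (n : ℕ) :
    ∑ r ∈ Finset.range n, max ((r : ℝ) + 1) a ^ (-p) ≤ p / (p - 1) * a ^ (1 - p) := by
  have hanti := antitone_max_rpow_neg (by linarith : 0 ≤ p) ha
  calc ∑ r ∈ Finset.range n, max ((r : ℝ) + 1) a ^ (-p)
      ≤ ∫ x in (0 : ℝ)..n, max x a ^ (-p) := by
        simpa using (hanti.antitoneOn (Icc (0 : ℝ) (0 + n))).sum_le_integral
    _ = ∫ x in Ioc (0 : ℝ) n, max x a ^ (-p) := intervalIntegral.integral_of_le n.cast_nonneg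
    _ ≤ ∫ x in Ioi 0, max x a ^ (-p) :=
        setIntegral_mono_set (integrableOn_Ioi_zero_max_rpow_neg hp ha)
          (ae_of_all _ fun x => Real.rpow_nonneg (le_max_of_le_right ha.le) _)
          Ioc_subset_Ioi_self.eventuallyLE
    _ = p / (p - 1) * a ^ (1 - p) := integral_Ioi_zero_max_rpow_neg hp ha

lemma sum_range_min_rpow_neg_le {τ : ℝ} (hp : 1 < p) (hτ : 0 < τ) (n : ℕ) :
    ∑ r ∈ Finset.range n, min τ (((r : ℝ) + 1) ^ (-p)) ≤ p / (p - 1) * τ ^ (1 - 1 / p) := by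
  have hp0 : 0 < p := by linarith
  -- `a` is the crossover point, where `a ^ (-p) = τ`.
  set a := τ ^ (-(1 / p)) with ha
  have ha0 : 0 < a := by positivity
  have hcross : a ^ (-p) = τ := by
    rw [ha, ← Real.rpow_mul hτ.le, neg_mul_neg, one_div_mul_cancel hp0.ne', Real.rpow_one]
  have hmin (r : ℕ) : min τ (((r : ℝ) + 1) ^ (-p)) ≤ max ((r : ℝ) + 1) a ^ (-p) := by
    rcases max_choice ((r : ℝ) + 1) a with h | h <;> rw [h]
    · exact min_le_right _ _
    · exact hcross.symm ▸ min_le_left _ _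
  calc ∑ r ∈ Finset.range n, min τ (((r : ℝ) + 1) ^ (-p))
      ≤ ∑ r ∈ Finset.range n, max ((r : ℝ) + 1) a ^ (-p) := Finset.sum_le_sum fun r _ => hmin r
    _ ≤ p / (p - 1) * a ^ (1 - p) := sum_range_max_rpow_neg_le hp ha0 n
    _ = p / (p - 1) * τ ^ (1 - 1 / p) := by
        rw [ha, ← Real.rpow_mul hτ.le]
        congr 2
        field_simp
        ring

end TruncatedPowerSum

lemma min_mul_le_one_add_mul_min {a b x : ℝ} (ha : 0 ≤ a) (hb : 0 ≤ b) (hx : 0 ≤ x) :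
    min a (b * x) ≤ (1 + b) * min a x := by
  rw [mul_min_of_nonneg _ _ (by positivity)]
  exact min_le_min (by nlinarith) (by linarith)

lemma sum_min_sq_le_of_abs_le_rpow {s c σ : ℝ} (hs : 1 / 2 < s) (hσ : 0 < σ) {d : ℕ}
    {μ : Fin d → ℝ} (e : Equiv.Perm (Fin d))
    (hμ : ∀ r : Fin d, |μ (e r)| ≤ c * ((r : ℝ) + 1) ^ (-s)) :
    ∑ i, min (σ ^ 2) (μ i ^ 2) ≤ (1 + c ^ 2) * (2 * s / (2 * s - 1)) * σ ^ (2 - 1 / s) := by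
  have : 0 < s := by linarith
  have hsq (r : Fin d) : μ (e r) ^ 2 ≤ c ^ 2 * ((r : ℝ) + 1) ^ (-(2 * s)) :=
    calc μ (e r) ^ 2 = |μ (e r)| ^ 2 := (sq_abs _).symm
      _ ≤ (c * ((r : ℝ) + 1) ^ (-s)) ^ 2 := by gcongr; exact hμ r
      _ = c ^ 2 * ((r : ℝ) + 1) ^ (-(2 * s)) := by
          rw [mul_pow, ← Real.rpow_mul_natCast (by positivity)]
          ring_nf
  have hpow : (σ ^ 2) ^ (1 - 1 / (2 * s)) = σ ^ (2 - 1 / s) := by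
    rw [← Real.rpow_natCast_mul hσ.le, Nat.cast_ofNat]
    congr 1
    field_simp
  calc ∑ i, min (σ ^ 2) (μ i ^ 2) = ∑ r, min (σ ^ 2) (μ (e r) ^ 2) := (Equiv.sum_comp e _).symm
    _ ≤ ∑ r : Fin d, (1 + c ^ 2) * min (σ ^ 2) (((r : ℝ) + 1) ^ (-(2 * s))) :=
        Finset.sum_le_sum fun r _ => (min_le_min_left _ (hsq r)).trans <|
          min_mul_le_one_add_mul_min (sq_nonneg σ) (sq_nonneg c) (by positivity)
    _ = (1 + c ^ 2) * ∑ r ∈ Finset.range d, min (σ ^ 2) (((r : ℝ) + 1) ^ (-(2 * s))) := by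
        rw [← Finset.mul_sum, Finset.sum_range]
    _ ≤ (1 + c ^ 2) * (2 * s / (2 * s - 1) * (σ ^ 2) ^ (1 - 1 / (2 * s))) := by
        gcongr
        exact sum_range_min_rpow_neg_le (by linarith) (by positivity) d
    _ = (1 + c ^ 2) * (2 * s / (2 * s - 1)) * σ ^ (2 - 1 / s) := by rw [hpow]; ring

theorem soft_thresholding_gaussian_estimate_general
    (s C c : ℝ) (hs : 1 / 2 < s) (hC : 0 < C) :
    ∃ K > 0, ∀ d : ℕ, 2 ≤ d → ∀ σ : ℝ, 0 < σ → σ ≤ C →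
      ∀ (μ : Fin d → ℝ) (e : Equiv.Perm (Fin d)),
        (∀ r : Fin d, |μ (e r)| ≤ c * ((r : ℝ) + 1) ^ (-s)) →
        ∫ x, ∑ i, (softThresh (σ * √(2 * Real.log d)) (x i) - μ i) ^ 2 ∂(gaussPi d μ σ) ≤
          K * σ ^ (2 - 1 / s) * Real.log d := by
  have : 0 < s := by linarith
  have hs1 : 0 < 2 * s - 1 := by linarith
  refine ⟨16 * (C ^ (1 / s) + (1 + c ^ 2) * (2 * s / (2 * s - 1))), by positivity, ?_⟩
  intro d hd σ hσ hσC μ e hμ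
  have hσ2 : σ ^ 2 ≤ C ^ (1 / s) * σ ^ (2 - 1 / s) :=
    calc σ ^ 2 = σ ^ (1 / s) * σ ^ (2 - 1 / s) := by
          rw [← Real.rpow_add hσ, add_sub_cancel, Real.rpow_two]
      _ ≤ C ^ (1 / s) * σ ^ (2 - 1 / s) := by gcongr
  calc ∫ x, ∑ i, (softThresh (σ * √(2 * Real.log d)) (x i) - μ i) ^ 2 ∂(gaussPi d μ σ)
      ≤ 16 * Real.log d * (σ ^ 2 + ∑ i, min (σ ^ 2) (μ i ^ 2)) :=
        softThresh_oracle_inequality hd hσ μ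
    _ ≤ 16 * Real.log d * (C ^ (1 / s) * σ ^ (2 - 1 / s) +
          (1 + c ^ 2) * (2 * s / (2 * s - 1)) * σ ^ (2 - 1 / s)) := by
        gcongr
        exact sum_min_sq_le_of_abs_le_rpow hs hσ e hμ
    _ = _ := by ring

/-- For `s > 1/2` there is a constant `K` (depending only on `s, c₁, c₂`)
such that for all `d ≥ 4`, `0 < σ ≤ c₁`, and `μ` with sorted coefficients decaying as
`r^{−s}`, soft-thresholding a Gaussian `N(μ, σ² I_d)` at `λ = σ √(2 log d)` satisfies
`E[‖ρ_t(x) − μ‖²] ≤ K σ^{2 − 1/s} log d`. -/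
theorem soft_thresholding_gaussian_estimate
    (s c₁ c₂ : ℝ) (hs : 1 / 2 < s) (hc₁ : 0 < c₁) (hc₂ : 0 < c₂) :
    ∃ K > 0, ∀ d : ℕ, 4 ≤ d → ∀ σ : ℝ, 0 < σ → σ ≤ c₁ →
      ∀ μ : Fin d → ℝ, sortedDecay s c₁ c₂ μ →
        ∫ x, ∑ i, (softThresh (σ * Real.sqrt (2 * Real.log d)) (x i) - μ i) ^ 2
            ∂(gaussPi d μ σ) ≤ K * σ ^ (2 - 1 / s) * Real.log d := by
  obtain ⟨K, hK, hrisk⟩ := soft_thresholding_gaussian_estimate_general s c₁ c₂ hs hc₁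
  exact ⟨K, hK, fun d hd σ hσ hσc μ ⟨e, _, he⟩ =>
    hrisk d (by omega) σ hσ hσc μ e fun r => (he r).2⟩
end

section
/- Fix λ ≥ 0 and an integer d ≥ 1, and let ρ_rt(u) = max(u − λ, 0). There exist a probability measure on ℝ^d admitting a density supported in the closed unit ball, a random vector x with this distribution, and a C^∞ function h : ℝ^d → ℝ, such that for every integer p ≥ d, every matrix F ∈ ℝ^{p×d} whose rows f_1, …, f_p satisfy ‖f_m‖ ≤ 1, every row vector W = (w_1, …, w_p) ∈ ℝ^{1×p}, and every b ∈ ℝ, the probability P[sign(∑_{m=1}^p w_m max(⟨f_m, x⟩ − λ, 0) + b) ≠ sign(h(x))] is at least 1/4. -/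
open MeasureTheory
open scoped RealInnerProductSpace ENNReal

/-!
Near the origin every threshold unit is either linear in the distance along a ray (`λ = 0`) or in
a single affine regime (`λ ≠ 0`), so on a small ball the whole network is affine along rays and
changes sign at most once on each of them. A radial function with sign pattern `+, -, +` on three
consecutive dyadic annuli therefore disagrees with the network at one of `x, 2x, 4x` for every `x`
in the innermost annulus. Under the measure `‖x‖⁻ᵈ dx`, which dilations preserve, the three annuli
have equal mass, so the disagreement has probability at least `1/3`.
-/

section Annulus

variable {E : Type*} [NormedAddCommGroup E]

/-- The half-open annulus of inner radius `r` and outer radius `R` centred at the origin; the inner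
sphere is included so that consecutive annuli partition their union. -/
def annulus (E : Type*) [NormedAddCommGroup E] (r R : ℝ) : Set E := norm ⁻¹' Set.Ico r R

lemma measurableSet_annulus [MeasurableSpace E] [OpensMeasurableSpace E] (r R : ℝ) :
    MeasurableSet (annulus E r R) :=
  measurable_norm measurableSet_Ico

lemma smul_mem_annulus_iff [NormedSpace ℝ E] {c : ℝ} (hc : 0 < c) {r R : ℝ} {x : E} :
    c • x ∈ annulus E (c * r) (c * R) ↔ x ∈ annulus E r R := by
  simp only [annulus, Set.mem_preimage, Set.mem_Ico, norm_smul, Real.norm_of_nonneg hc.le,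
    mul_le_mul_iff_right₀ hc, mul_lt_mul_iff_right₀ hc]

lemma measure_annulus_eq_sum [MeasurableSpace E] [OpensMeasurableSpace E] (μ : Measure E)
    {a : ℕ → ℝ} (ha : Monotone a) (n : ℕ) :
    μ (annulus E (a 0) (a n)) = ∑ k ∈ Finset.range n, μ (annulus E (a k) (a (k + 1))) := by
  induction n with
  | zero => simp [annulus]
  | succ n ih =>
    have hunion : annulus E (a 0) (a (n + 1)) =
        annulus E (a 0) (a n) ∪ annulus E (a n) (a (n + 1)) := by
      simp only [annulus, ← Set.preimage_union,
        Set.Ico_union_Ico_eq_Ico (ha n.zero_le) (ha n.le_succ)]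
    have hdisj : Disjoint (annulus E (a 0) (a n)) (annulus E (a n) (a (n + 1))) :=
      (Set.Ico_disjoint_Ico_same).preimage _
    rw [hunion, measure_union hdisj (measurableSet_annulus _ _), ih, Finset.sum_range_succ]

end Annulus

section Dilation

variable {E : Type*} [NormedAddCommGroup E] [NormedSpace ℝ E] [MeasurableSpace E] [BorelSpace E]
  {μ : Measure E} {c : ℝ}

lemma measure_preimage_pow_smul (hc : 0 < c) (hμ : MeasurePreserving (c • · : E → E) μ μ) (k : ℕ)
    (s : Set E) : μ ((c ^ k • · : E → E) ⁻¹' s) = μ s := by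
  have hk : MeasurePreserving (c ^ k • · : E → E) μ μ := by
    simpa only [smul_iterate] using hμ.iterate k
  exact hk.measure_preimage_emb (measurableEmbedding_const_smul₀ (pow_pos hc k).ne') s

lemma measure_annulus_pow_mul (hc : 0 < c) (hμ : MeasurePreserving (c • · : E → E) μ μ) (r : ℝ)
    (k : ℕ) : μ (annulus E (c ^ k * r) (c ^ (k + 1) * r)) = μ (annulus E r (c * r)) := by
  rw [← measure_preimage_pow_smul hc hμ k]
  congr 1
  ext x
  rw [Set.mem_preimage, pow_succ, mul_assoc, smul_mem_annulus_iff (pow_pos hc k)]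

lemma measure_annulus_le_measure_inter (hc : 1 ≤ c)
    (hμ : MeasurePreserving (c • · : E → E) μ μ) {r : ℝ} (hr : 0 ≤ r) {n : ℕ} {D : Set E}
    (hD : ∀ x ∈ annulus E r (c * r), ∃ k < n, c ^ k • x ∈ D) :
    μ (annulus E r (c * r)) ≤ μ (annulus E r (c ^ n * r) ∩ D) := by
  have hc0 : 0 < c := one_pos.trans_le hc
  let A (k : ℕ) : Set E := annulus E (c ^ k * r) (c ^ (k + 1) * r)
  have hcover : annulus E r (c * r) ⊆ ⋃ k ∈ Finset.range n, (c ^ k • ·) ⁻¹' (A k ∩ D) := by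
    intro x hx
    obtain ⟨k, hk, hkD⟩ := hD x hx
    refine Set.mem_biUnion (Finset.mem_coe.2 (Finset.mem_range.2 hk)) ⟨?_, hkD⟩
    simpa only [A, pow_succ, mul_assoc] using (smul_mem_annulus_iff (pow_pos hc0 k)).2 hx
  have hmono : Monotone fun k : ℕ => c ^ k * r := (pow_right_mono₀ hc).mul_const hr
  calc μ (annulus E r (c * r))
      ≤ ∑ k ∈ Finset.range n, μ ((c ^ k • ·) ⁻¹' (A k ∩ D)) :=
        (measure_mono hcover).trans (measure_biUnion_finset_le _ _)
    _ = ∑ k ∈ Finset.range n, μ.restrict D (A k) :=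
        Finset.sum_congr rfl fun k _ => by
          rw [measure_preimage_pow_smul hc0 hμ, Measure.restrict_apply (measurableSet_annulus _ _)]
    _ = μ (annulus E r (c ^ n * r) ∩ D) := by
        rw [← measure_annulus_eq_sum (μ.restrict D) hmono n, pow_zero, one_mul,
          Measure.restrict_apply (measurableSet_annulus _ _)]

lemma inv_natCast_le_cond_annulus (hc : 1 ≤ c) (hμ : MeasurePreserving (c • · : E → E) μ μ)
    {r : ℝ} (hr : 0 ≤ r) {n : ℕ} {D : Set E} (h0 : μ (annulus E r (c ^ n * r)) ≠ 0)
    (htop : μ (annulus E r (c ^ n * r)) ≠ ∞)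
    (hD : ∀ x ∈ annulus E r (c * r), ∃ k < n, c ^ k • x ∈ D) :
    (n : ℝ≥0∞)⁻¹ ≤ ProbabilityTheory.cond μ (annulus E r (c ^ n * r)) D := by
  have hmono : Monotone fun k : ℕ => c ^ k * r := (pow_right_mono₀ hc).mul_const hr
  have hmass : μ (annulus E r (c ^ n * r)) = n * μ (annulus E r (c * r)) := by
    simpa [measure_annulus_pow_mul (one_pos.trans_le hc) hμ] using measure_annulus_eq_sum μ hmono n
  have hle : μ (annulus E r (c ^ n * r)) ≤ n * μ (annulus E r (c ^ n * r) ∩ D) :=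
    hmass.trans_le (mul_le_mul_right (measure_annulus_le_measure_inter hc hμ hr hD) _)
  rw [ProbabilityTheory.cond_apply (measurableSet_annulus _ _), ← ENNReal.div_eq_inv_mul,
    ENNReal.le_div_iff_mul_le (.inl h0) (.inl htop), mul_comm, ← div_eq_mul_inv]
  exact ENNReal.div_le_of_le_mul' hle

end Dilation

section ScaleInvariantMeasure

lemma measurable_inv_enorm_pow {E : Type*} [NormedAddCommGroup E] [MeasurableSpace E]
    [OpensMeasurableSpace E] (n : ℕ) : Measurable fun x : E => (‖x‖ₑ ^ n)⁻¹ :=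
  (measurable_enorm.pow_const n).inv

variable {E : Type*} [NormedAddCommGroup E] [NormedSpace ℝ E] [MeasurableSpace E]

/-- The measure `‖x‖⁻ᵈ dμ(x)` on a `d`-dimensional space, which is preserved by dilations when `μ`
is a Haar measure. Its density is `∞` at the origin (for `d ≠ 0`). -/
noncomputable def scaleInvariantMeasure (μ : Measure E) : Measure E :=
  μ.withDensity fun x => (‖x‖ₑ ^ Module.finrank ℝ E)⁻¹

variable [BorelSpace E] (μ : Measure E)

lemma scaleInvariantMeasure_annulus_ne_zero [μ.IsOpenPosMeasure] [Nontrivial E] {r R : ℝ}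
    (hR : 0 < R) (hrR : r < R) : scaleInvariantMeasure μ (annulus E r R) ≠ 0 := by
  have habs : μ ≪ scaleInvariantMeasure μ :=
    withDensity_absolutelyContinuous' (measurable_inv_enorm_pow _).aemeasurable <|
      .of_forall fun x => ENNReal.inv_ne_zero.2 (ENNReal.pow_ne_top enorm_ne_top)
  obtain ⟨ρ, hρ, hρR⟩ := exists_between (max_lt hR hrR)
  obtain ⟨x, hx⟩ := exists_norm_eq E ((le_max_left 0 r).trans hρ.le)
  have hopen : IsOpen (norm ⁻¹' Set.Ioo r R : Set E) := isOpen_Ioo.preimage continuous_norm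
  have hne : (norm ⁻¹' Set.Ioo r R : Set E).Nonempty :=
    ⟨x, by simpa [hx] using ⟨(le_max_right 0 r).trans_lt hρ, hρR⟩⟩
  have hpos : μ (annulus E r R) ≠ 0 :=
    ((hopen.measure_pos μ hne).trans_le
      (measure_mono (Set.preimage_mono Set.Ioo_subset_Ico_self))).ne'
  exact fun h => hpos (habs h)

variable [FiniteDimensional ℝ E]

lemma measurePreserving_smul_scaleInvariantMeasure [μ.IsAddHaarMeasure] {c : ℝ} (hc : c ≠ 0) :
    MeasurePreserving (c • · : E → E) (scaleInvariantMeasure μ) (scaleInvariantMeasure μ) := by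
  set d := Module.finrank ℝ E
  have hmeas : Measurable (c • · : E → E) := measurable_const_smul c
  have hcd0 : ‖c‖ₑ ^ d ≠ 0 := pow_ne_zero d (enorm_ne_zero.2 hc)
  have hcdtop : ‖c‖ₑ ^ d ≠ ∞ := ENNReal.pow_ne_top enorm_ne_top
  have hdens (x : E) : (‖x‖ₑ ^ d)⁻¹ = ‖c‖ₑ ^ d * (‖c • x‖ₑ ^ d)⁻¹ := by
    rw [enorm_smul, mul_pow, ENNReal.mul_inv (.inl hcd0) (.inl hcdtop), ← mul_assoc,
      ENNReal.mul_inv_cancel hcd0 hcdtop, one_mul]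
  have hjac : ENNReal.ofReal |(c ^ d)⁻¹| = (‖c‖ₑ ^ d)⁻¹ := by
    rw [← Real.enorm_eq_ofReal_abs, enorm_inv (pow_ne_zero d hc), enorm_pow]
  refine ⟨hmeas, Measure.ext fun s hs => ?_⟩
  rw [Measure.map_apply hmeas hs, scaleInvariantMeasure, withDensity_apply _ (hmeas hs),
    withDensity_apply _ hs]
  calc ∫⁻ x in (c • ·) ⁻¹' s, (‖x‖ₑ ^ d)⁻¹ ∂μ
      = ‖c‖ₑ ^ d * ∫⁻ x in (c • ·) ⁻¹' s, (‖c • x‖ₑ ^ d)⁻¹ ∂μ := by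
        rw [lintegral_congr hdens]
        exact lintegral_const_mul _ ((measurable_inv_enorm_pow d).comp hmeas)
    _ = ‖c‖ₑ ^ d * ∫⁻ y in s, (‖y‖ₑ ^ d)⁻¹ ∂μ.map (c • ·) := by
        rw [setLIntegral_map hs (measurable_inv_enorm_pow d) hmeas]
    _ = ∫⁻ y in s, (‖y‖ₑ ^ d)⁻¹ ∂μ := by
        rw [Measure.map_addHaar_smul μ hc, Measure.restrict_smul, lintegral_smul_measure, hjac,
          smul_eq_mul, ← mul_assoc, ENNReal.mul_inv_cancel hcd0 hcdtop, one_mul]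

lemma scaleInvariantMeasure_annulus_ne_top [IsFiniteMeasureOnCompacts μ] {r : ℝ} (hr : 0 < r)
    (R : ℝ) : scaleInvariantMeasure μ (annulus E r R) ≠ ∞ := by
  set d := Module.finrank ℝ E
  have hvol : μ (annulus E r R) ≠ ∞ :=
    measure_ne_top_of_subset (fun x hx => mem_ball_zero_iff.2 hx.2)
      (measure_ball_lt_top (x := (0 : E)) (r := R)).ne
  rw [scaleInvariantMeasure, withDensity_apply _ (measurableSet_annulus r R)]
  refine (setLIntegral_lt_top_of_le_nnreal hvol ⟨(‖r‖₊ ^ d)⁻¹, fun x hx => ?_⟩).ne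
  have hrx : ‖r‖ₑ ≤ ‖x‖ₑ := by
    rw [enorm_le_iff_norm_le, Real.norm_of_nonneg hr.le]
    exact hx.1
  rw [ENNReal.coe_inv (pow_ne_zero d (nnnorm_ne_zero_iff.2 hr.ne')), ENNReal.coe_pow]
  gcongr
  exact hrx

end ScaleInvariantMeasure

lemma cond_withDensity {α : Type*} [MeasurableSpace α] (μ : Measure α) {g : α → ℝ≥0∞}
    (hg : Measurable g) {s : Set α} (hs : MeasurableSet s) :
    ProbabilityTheory.cond (μ.withDensity g) s =
      μ.withDensity ((μ.withDensity g s)⁻¹ • s.indicator g) := by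
  rw [withDensity_smul _ (hg.indicator hs), withDensity_indicator hs, ← restrict_withDensity hs,
    ProbabilityTheory.cond]

section ThresholdNetwork

variable {E : Type*} [NormedAddCommGroup E] [InnerProductSpace ℝ E] {ι : Type*} [Fintype ι]

/-- The two-layer network `x ↦ W ρ(F x) + b` without hidden-layer bias, where `ρ` is the rectifier
with threshold `lam`, the rows of `F` are the vectors `f i`, and the entries of `W` are the
weights `w i`. -/
def thresholdNetwork (lam : ℝ) (f : ι → E) (w : ι → ℝ) (b : ℝ) (x : E) : ℝ :=
  ∑ i, w i * max (⟪f i, x⟫ - lam) 0 + b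

lemma exists_affine_eq_max_mul_sub {lam t S : ℝ} (h : lam = 0 ∨ S * |t| ≤ |lam|) :
    ∃ a b : ℝ, ∀ s ∈ Set.Icc 0 S, max (s * t - lam) 0 = s * a + b := by
  rcases h with rfl | h
  · refine ⟨max t 0, 0, fun s hs => ?_⟩
    rw [sub_zero, add_zero, mul_max_of_nonneg _ _ hs.1, mul_zero]
  have hst (s : ℝ) (hs : s ∈ Set.Icc 0 S) : |s * t| ≤ |lam| := by
    rw [abs_mul, abs_of_nonneg hs.1]
    exact (mul_le_mul_of_nonneg_right hs.2 (abs_nonneg t)).trans h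
  rcases le_total 0 lam with hlam | hlam
  · refine ⟨0, 0, fun s hs => ?_⟩
    have := (abs_le.1 (hst s hs)).2
    rw [abs_of_nonneg hlam] at this
    rw [max_eq_right (sub_nonpos.2 this), mul_zero, add_zero]
  · refine ⟨t, -lam, fun s hs => ?_⟩
    have := (abs_le.1 (hst s hs)).1
    rw [abs_of_nonpos hlam, neg_neg] at this
    rw [max_eq_left (sub_nonneg.2 this), sub_eq_add_neg]

lemma exists_affine_eq_thresholdNetwork_smul {lam S : ℝ} (hS : 0 ≤ S) {f : ι → E}
    (hf : ∀ i, ‖f i‖ ≤ 1) (w : ι → ℝ) (b : ℝ) {x : E} (h : lam = 0 ∨ S * ‖x‖ ≤ |lam|) :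
    ∃ a b' : ℝ, ∀ s ∈ Set.Icc 0 S, thresholdNetwork lam f w b (s • x) = s * a + b' := by
  have hinner (i : ι) : |⟪f i, x⟫| ≤ ‖x‖ :=
    (abs_real_inner_le_norm _ _).trans (mul_le_of_le_one_left (norm_nonneg x) (hf i))
  choose a c hac using fun i => exists_affine_eq_max_mul_sub
    (h.imp_right (mul_le_mul_of_nonneg_left (hinner i) hS).trans)
  refine ⟨∑ i, w i * a i, ∑ i, w i * c i + b, fun s hs => ?_⟩
  simp only [thresholdNetwork, real_inner_smul_right, hac _ s hs, mul_add, Finset.sum_add_distrib,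
    mul_left_comm (w _) s, ← Finset.mul_sum, add_assoc]

end ThresholdNetwork

section Sign

lemma real_sign_eq_one_iff {u : ℝ} : Real.sign u = 1 ↔ 0 < u := by
  refine ⟨fun h => ?_, Real.sign_of_pos⟩
  have hu : u ≠ 0 := by
    rintro rfl
    simp at h
  simpa [h] using Real.sign_mul_pos_of_ne_zero u hu

lemma pos_iff_of_real_sign_eq {u v : ℝ} (h : Real.sign u = Real.sign v) : 0 < u ↔ 0 < v := by
  rw [← real_sign_eq_one_iff, h, real_sign_eq_one_iff]

lemma neg_iff_of_real_sign_eq {u v : ℝ} (h : Real.sign u = Real.sign v) : u < 0 ↔ v < 0 := by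
  simpa only [neg_pos] using
    pos_iff_of_real_sign_eq (u := -u) (v := -v) (by rw [Real.sign_neg, Real.sign_neg, h])

lemma exists_sign_affine_ne {s h : ℕ → ℝ} (hs : StrictMono s) (h0 : 0 < h 0) (h1 : h 1 ≤ 0)
    (h2 : 0 ≤ h 2) (a b : ℝ) : ∃ k < 3, Real.sign (s k * a + b) ≠ Real.sign (h k) := by
  by_contra! hsign
  have hpos : 0 < s 0 * a + b := (pos_iff_of_real_sign_eq (hsign 0 (by norm_num))).2 h0
  have hnonpos : s 1 * a + b ≤ 0 :=
    not_lt.1 fun hlt => h1.not_gt ((pos_iff_of_real_sign_eq (hsign 1 (by norm_num))).1 hlt)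
  have hnonneg : 0 ≤ s 2 * a + b :=
    not_lt.1 fun hlt => h2.not_gt ((neg_iff_of_real_sign_eq (hsign 2 (by norm_num))).1 hlt)
  have ha : a < 0 := neg_of_mul_neg_right (a := s 1 - s 0) (by linarith)
    (sub_nonneg.2 (hs one_pos).le)
  have : s 2 * a < s 1 * a := mul_lt_mul_of_neg_right (hs one_lt_two) ha
  linarith

end Sign

section RadialQuartic

variable {E : Type*} [NormedAddCommGroup E]

/-- The target classifier: a radial function that vanishes exactly on the spheres of radii `2r` and
`4r` and is negative exactly between them (for `r > 0`). -/
def radialQuartic (r : ℝ) (x : E) : ℝ := (‖x‖ ^ 2 - (2 * r) ^ 2) * (‖x‖ ^ 2 - (4 * r) ^ 2)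

variable {r : ℝ} {x : E}

lemma radialQuartic_pos (h : ‖x‖ < 2 * r) : 0 < radialQuartic r x := by
  have hx := norm_nonneg x
  exact mul_pos_of_neg_of_neg (by nlinarith) (by nlinarith)

lemma radialQuartic_nonpos (hr : 0 ≤ r) (h₂ : 2 * r ≤ ‖x‖) (h₄ : ‖x‖ ≤ 4 * r) :
    radialQuartic r x ≤ 0 :=
  mul_nonpos_of_nonneg_of_nonpos (by nlinarith) (by nlinarith)

lemma radialQuartic_nonneg (hr : 0 ≤ r) (h : 4 * r ≤ ‖x‖) : 0 ≤ radialQuartic r x :=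
  mul_nonneg (by nlinarith) (by nlinarith)

variable [InnerProductSpace ℝ E]

lemma contDiff_radialQuartic (r : ℝ) {n : WithTop ℕ∞} :
    ContDiff ℝ n (radialQuartic r : E → ℝ) :=
  ((contDiff_norm_sq ℝ).sub contDiff_const).mul ((contDiff_norm_sq ℝ).sub contDiff_const)

lemma exists_sign_thresholdNetwork_smul_ne {ι : Type*} [Fintype ι] {lam : ℝ}
    (hr : 0 ≤ r) (hlam : lam = 0 ∨ 8 * r ≤ |lam|) {f : ι → E} (hf : ∀ i, ‖f i‖ ≤ 1) (w : ι → ℝ)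
    (b : ℝ) (hx : x ∈ annulus E r (2 * r)) :
    ∃ k < 3, Real.sign (thresholdNetwork lam f w b ((2 : ℝ) ^ k • x)) ≠
      Real.sign (radialQuartic r ((2 : ℝ) ^ k • x)) := by
  obtain ⟨hrx, hxr⟩ : r ≤ ‖x‖ ∧ ‖x‖ < 2 * r := hx
  have hnorm (k : ℕ) : ‖(2 : ℝ) ^ k • x‖ = 2 ^ k * ‖x‖ := by
    rw [norm_smul, norm_pow, Real.norm_ofNat]
  obtain ⟨a, c, hac⟩ := exists_affine_eq_thresholdNetwork_smul (x := x) (S := 4) (by norm_num) hf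
    w b (hlam.imp_right fun h => by linarith)
  obtain ⟨k, hk, hne⟩ := exists_sign_affine_ne
    (h := fun k => radialQuartic r ((2 : ℝ) ^ k • x)) (pow_right_strictMono₀ (one_lt_two (α := ℝ)))
    (radialQuartic_pos (by rw [hnorm]; linarith))
    (radialQuartic_nonpos hr (by rw [hnorm]; linarith) (by rw [hnorm]; linarith))
    (radialQuartic_nonneg hr (by rw [hnorm]; linarith)) a c
  have hk4 : (2 : ℝ) ^ k ≤ 4 :=
    (pow_le_pow_right₀ one_le_two (Nat.le_of_lt_succ hk)).trans_eq (by norm_num)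
  exact ⟨k, hk, by rwa [hac _ ⟨by positivity, hk4⟩]⟩

end RadialQuartic

lemma exists_pos_le_one_and_le_abs (lam : ℝ) :
    ∃ R : ℝ, 0 < R ∧ R ≤ 1 ∧ (lam = 0 ∨ R ≤ |lam|) := by
  rcases eq_or_ne lam 0 with hlam | hlam
  · exact ⟨1, one_pos, le_rfl, .inl hlam⟩
  · exact ⟨min 1 |lam|, lt_min one_pos (abs_pos.2 hlam), min_le_left _ _, .inr (min_le_right _ _)⟩

theorem no_universal_approximation_bias_free_general {E : Type*} [NormedAddCommGroup E]
    [InnerProductSpace ℝ E] [FiniteDimensional ℝ E] [Nontrivial E] [MeasurableSpace E]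
    [BorelSpace E] (μ : Measure E) [μ.IsAddHaarMeasure] (lam : ℝ) :
    ∃ (ν : Measure E) (_ : IsProbabilityMeasure ν) (f : E → ℝ≥0∞) (h : E → ℝ),
      ν = μ.withDensity f ∧ (∀ x, 1 < ‖x‖ → f x = 0) ∧ ContDiff ℝ (⊤ : ℕ∞) h ∧
      ∀ (p : ℕ) (F : Fin p → E), (∀ m, ‖F m‖ ≤ 1) → ∀ (w : Fin p → ℝ) (b : ℝ),
        (1 / 3 : ℝ≥0∞) ≤
          ν {x | Real.sign (thresholdNetwork lam F w b x) ≠ Real.sign (h x)} := by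
  obtain ⟨R, hR, hR1, hRlam⟩ := exists_pos_le_one_and_le_abs lam
  obtain ⟨r, rfl⟩ : ∃ r, R = 2 ^ 3 * r := ⟨R / 8, by ring⟩
  have hr : 0 < r := by linarith
  have h0 := scaleInvariantMeasure_annulus_ne_zero μ hR (by linarith : r < 2 ^ 3 * r)
  have htop := scaleInvariantMeasure_annulus_ne_top μ hr (2 ^ 3 * r)
  refine ⟨ProbabilityTheory.cond (scaleInvariantMeasure μ) (annulus E r (2 ^ 3 * r)),
    ProbabilityTheory.cond_isProbabilityMeasure_of_finite h0 htop, _, radialQuartic r,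
    cond_withDensity μ (measurable_inv_enorm_pow _) (measurableSet_annulus _ _), fun x hx => ?_,
    contDiff_radialQuartic r, fun p F hF w b => ?_⟩
  · have hxA : x ∉ annulus E r (2 ^ 3 * r) := fun hxA => (hxA.2.trans_le hR1).not_gt hx
    rw [Pi.smul_apply, Set.indicator_of_notMem hxA, smul_zero]
  · rw [one_div]
    exact inv_natCast_le_cond_annulus one_le_two
      (measurePreserving_smul_scaleInvariantMeasure μ two_ne_zero) hr.le h0 htop fun x hx =>
        exists_sign_thresholdNetwork_smul_ne hr.le (hRlam.imp_right fun h => by linarith) hF w b hx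

/-- Non-universality of bias-free two-layer networks.  For any fixed
threshold `lam ≥ 0` and dimension `d`, there exist a probability measure with a density
supported in the closed unit ball and a `C^∞` function `h` such that every bias-free
two-layer network `x ↦ ∑_m w_m max(⟨f_m, x⟩ − lam, 0) + b` with rows `‖f_m‖ ≤ 1`
disagrees with `sign(h(x))` with probability at least `1/4`. -/
theorem no_universal_approximation_bias_free
    (lam : ℝ) (hlam : 0 ≤ lam) (d : ℕ) (hd : 1 ≤ d) :
    ∃ (ν : Measure (EuclideanSpace ℝ (Fin d))) (_ : IsProbabilityMeasure ν)
      (f : EuclideanSpace ℝ (Fin d) → ℝ≥0∞) (h : EuclideanSpace ℝ (Fin d) → ℝ),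
      ν = volume.withDensity f ∧
      (∀ x : EuclideanSpace ℝ (Fin d), 1 < ‖x‖ → f x = 0) ∧
      ContDiff ℝ (⊤ : ℕ∞) h ∧
      ∀ p : ℕ, d ≤ p →
        ∀ F : Fin p → EuclideanSpace ℝ (Fin d), (∀ m, ‖F m‖ ≤ 1) →
        ∀ (w : Fin p → ℝ) (b : ℝ),
          (1 / 4 : ℝ≥0∞) ≤
            ν {x | Real.sign (∑ m, w m * max (⟪F m, x⟫ - lam) 0 + b) ≠ Real.sign (h x)} := by
  have : Nonempty (Fin d) := ⟨⟨0, hd⟩⟩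
  obtain ⟨ν, hν, f, h, hνf, hf, hh, hsign⟩ := no_universal_approximation_bias_free_general
    (volume : Measure (EuclideanSpace ℝ (Fin d))) lam
  exact ⟨ν, hν, f, h, hνf, hf, hh, fun p _ F hF w b =>
    (ENNReal.div_le_div_left (by norm_num) 1).trans (hsign p F hF w b)⟩
end

section
/- For all real numbers a and b, if r is a random variable uniformly distributed on [0, 1], then P[sign(a r + b) ≠ sign(cos(2π r))] ≥ 1/4. -/
open MeasureTheory
open scoped ENNReal

/-!
A monotone function `f` is `≥ 0` on `[1/2, 1]` or `≤ 0` on `[0, 1/2]`, according to the sign of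
`f (1/2)`. In the first case it disagrees with the negative values of `cos (2π r)` on `(1/2, 3/4)`,
in the second with the positive values on `(0, 1/4)`. The reflection `r ↦ 1 - r` preserves
`cos (2π r)` and reduces the antitone case to the monotone one; affine functions are of one of the
two kinds.
-/

theorem sign_ne_sign_of_nonneg_of_neg {x y : ℝ} (hx : 0 ≤ x) (hy : y < 0) :
    Real.sign x ≠ Real.sign y := by
  rw [Real.sign_of_neg hy]
  rcases hx.eq_or_lt with rfl | hx
  · norm_num
  · norm_num [Real.sign_of_pos hx]

theorem sign_ne_sign_of_nonpos_of_pos {x y : ℝ} (hx : x ≤ 0) (hy : 0 < y) :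
    Real.sign x ≠ Real.sign y := by
  have h := sign_ne_sign_of_nonneg_of_neg (neg_nonneg.2 hx) (neg_neg_of_pos hy)
  simpa only [Real.sign_neg, ne_eq, neg_inj] using h

theorem cos_two_pi_mul_pos {r : ℝ} (hr : r ∈ Set.Ioo (-(1 / 4)) (1 / 4)) :
    0 < Real.cos (2 * Real.pi * r) :=
  Real.cos_pos_of_mem_Ioo
    ⟨by nlinarith [Real.pi_pos, hr.1], by nlinarith [Real.pi_pos, hr.2]⟩

theorem cos_two_pi_mul_neg {r : ℝ} (hr : r ∈ Set.Ioo (1 / 4) (3 / 4)) :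
    Real.cos (2 * Real.pi * r) < 0 :=
  Real.cos_neg_of_pi_div_two_lt_of_lt
    (by nlinarith [Real.pi_pos, hr.1]) (by nlinarith [Real.pi_pos, hr.2])

theorem cos_two_pi_mul_one_sub (r : ℝ) :
    Real.cos (2 * Real.pi * (1 - r)) = Real.cos (2 * Real.pi * r) := by
  rw [mul_one_sub, Real.cos_two_pi_sub]

theorem exists_Ioo_sign_ne_cos_of_monotoneOn {f : ℝ → ℝ} (hf : MonotoneOn f (Set.Icc 0 1)) :
    ∃ c ∈ Set.Icc (0 : ℝ) (3 / 4), ∀ r ∈ Set.Ioo c (c + 1 / 4),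
      Real.sign (f r) ≠ Real.sign (Real.cos (2 * Real.pi * r)) := by
  have half_mem : (1 / 2 : ℝ) ∈ Set.Icc 0 1 := by norm_num
  rcases le_total 0 (f (1 / 2)) with h_nonneg | h_nonpos
  · refine ⟨1 / 2, by norm_num, fun r ⟨hr₁, hr₂⟩ ↦ sign_ne_sign_of_nonneg_of_neg ?_ ?_⟩
    · exact h_nonneg.trans (hf half_mem ⟨by linarith, by linarith⟩ hr₁.le)
    · exact cos_two_pi_mul_neg ⟨by linarith, by linarith⟩
  · refine ⟨0, by norm_num, fun r ⟨hr₁, hr₂⟩ ↦ sign_ne_sign_of_nonpos_of_pos ?_ ?_⟩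
    · exact (hf ⟨hr₁.le, by linarith⟩ half_mem (by linarith)).trans h_nonpos
    · exact cos_two_pi_mul_pos ⟨by linarith, by linarith⟩

theorem exists_Ioo_sign_ne_cos_of_antitoneOn {f : ℝ → ℝ} (hf : AntitoneOn f (Set.Icc 0 1)) :
    ∃ c ∈ Set.Icc (0 : ℝ) (3 / 4), ∀ r ∈ Set.Ioo c (c + 1 / 4),
      Real.sign (f r) ≠ Real.sign (Real.cos (2 * Real.pi * r)) := by
  have reflected_mono : MonotoneOn (fun r ↦ f (1 - r)) (Set.Icc 0 1) := fun x hx y hy hxy ↦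
    hf (Set.Icc.mem_iff_one_sub_mem.1 hy) (Set.Icc.mem_iff_one_sub_mem.1 hx)
      (sub_le_sub_left hxy 1)
  obtain ⟨c, ⟨hc₀, hc₁⟩, hc⟩ := exists_Ioo_sign_ne_cos_of_monotoneOn reflected_mono
  refine ⟨3 / 4 - c, ⟨by linarith, by linarith⟩, fun r ⟨hr₁, hr₂⟩ ↦ ?_⟩
  simpa only [sub_sub_cancel, cos_two_pi_mul_one_sub] using
    hc (1 - r) ⟨by linarith, by linarith⟩

theorem measure_le_restrict_of_subset {α : Type*} [MeasurableSpace α] {μ : Measure α}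
    {s t u : Set α} (hts : t ⊆ s) (htu : t ⊆ u) : μ t ≤ μ.restrict s u :=
  (measure_mono (Set.subset_inter htu hts)).trans (Measure.le_restrict_apply s u)

theorem affine_sign_disagrees_with_cos_general {f : ℝ → ℝ}
    (hf : MonotoneOn f (Set.Icc 0 1) ∨ AntitoneOn f (Set.Icc 0 1)) :
    (1 / 4 : ℝ≥0∞) ≤ volume.restrict (Set.Icc (0 : ℝ) 1)
      {r : ℝ | Real.sign (f r) ≠ Real.sign (Real.cos (2 * Real.pi * r))} := by
  obtain ⟨c, ⟨hc₀, hc₁⟩, hc⟩ :=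
    hf.elim exists_Ioo_sign_ne_cos_of_monotoneOn exists_Ioo_sign_ne_cos_of_antitoneOn
  have subset_unit : Set.Ioo c (c + 1 / 4) ⊆ Set.Icc 0 1 :=
    Set.Ioo_subset_Icc_self.trans (Set.Icc_subset_Icc hc₀ (by linarith))
  calc (1 / 4 : ℝ≥0∞) = volume (Set.Ioo c (c + 1 / 4)) := by
        rw [Real.volume_Ioo, add_sub_cancel_left, ENNReal.ofReal_div_of_pos four_pos,
          ENNReal.ofReal_one, ENNReal.ofReal_ofNat]
    _ ≤ _ := measure_le_restrict_of_subset subset_unit hc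

theorem monotone_or_antitone_mul_add (a b : ℝ) :
    Monotone (fun r ↦ a * r + b) ∨ Antitone (fun r ↦ a * r + b) :=
  (le_total 0 a).imp (fun ha ↦ (monotone_id.const_mul ha).add_const b)
    (fun ha ↦ (monotone_id.const_mul_of_nonpos ha).add_const b)

/-- For `r` uniformly distributed on `[0, 1]`, any affine function `a r + b`
disagrees in sign with `cos(2π r)` with probability at least `1/4`. -/
theorem affine_sign_disagrees_with_cos
    (a b : ℝ) :
    (1 / 4 : ℝ≥0∞) ≤ volume.restrict (Set.Icc (0 : ℝ) 1)
      {r : ℝ | Real.sign (a * r + b) ≠ Real.sign (Real.cos (2 * Real.pi * r))} :=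
  affine_sign_disagrees_with_cos_general <|
    (monotone_or_antitone_mul_add a b).imp (·.monotoneOn _) (·.antitoneOn _)
end

section
/- Fix λ > 0 and an integer d ≥ 1. Let u be uniformly distributed on the unit sphere S^{d−1} ⊂ ℝ^d, let r be uniformly distributed on (0, λ), independent of u, and set x = r u and h(x) = cos(π ‖x‖ / λ). Then for every integer p ≥ 1, every matrix F ∈ ℝ^{p×d} whose rows f_1, …, f_p satisfy ‖f_m‖ ≤ 1, every W = (w_1, …, w_p) ∈ ℝ^{1×p}, and every b ∈ ℝ, the network output ∑_{m=1}^p w_m max(⟨f_m, x⟩ − λ, 0) + b equals b almost surely, and P[sign(∑_{m=1}^p w_m max(⟨f_m, x⟩ − λ, 0) + b) ≠ sign(h(x))] ≥ 1/2. -/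
open MeasureTheory
open scoped RealInnerProductSpace ENNReal

/-!
By Cauchy–Schwarz, a threshold unit whose weight vector has norm at most `1` is inactive on the
ball of radius `lam`, so on that ball the network is constantly equal to its bias `b`. The target
`cos (π ‖x‖ / lam)` is positive for `‖x‖ < lam / 2` and negative for `lam / 2 < ‖x‖ < lam`, and each
of these events has probability `1 / 2`; on at least one of them the constant `b` has the wrong
sign.
-/

section Uniform

variable {Ω : Type*} {mΩ : MeasurableSpace Ω} {P : Measure Ω}

theorem isUniform_Ioo_iff {X : Ω → ℝ} {a b : ℝ} :
    pdf.IsUniform X (Set.Ioo a b) P ↔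
      P.map X = (ENNReal.ofReal (b - a))⁻¹ • volume.restrict (Set.Ioo a b) := by
  rw [pdf.IsUniform, ProbabilityTheory.cond, Real.volume_Ioo]

theorem ae_mem_of_isUniform {α : Type*} [MeasurableSpace α] {μ : Measure α} {X : Ω → α}
    {s : Set α} (hX : AEMeasurable X P) (hs : MeasurableSet s) (hunif : pdf.IsUniform X s P μ) :
    ∀ᵐ ω ∂P, X ω ∈ s :=
  ae_of_ae_map hX (hunif ▸ ProbabilityTheory.ae_cond_mem hs)

theorem measure_preimage_Ioo_of_isUniform_Ioo {X : Ω → ℝ} {a b c d : ℝ} (hab : a < b)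
    (hunif : pdf.IsUniform X (Set.Ioo a b) P) (hac : a ≤ c) (hdb : d ≤ b) :
    P (X ⁻¹' Set.Ioo c d) = ENNReal.ofReal ((d - c) / (b - a)) := by
  have hlength : 0 < b - a := sub_pos.2 hab
  rw [hunif.measure_preimage (by simpa using hab) (by simp) measurableSet_Ioo,
    Set.inter_eq_right.2 (Set.Ioo_subset_Ioo hac hdb), Real.volume_Ioo, Real.volume_Ioo,
    ENNReal.ofReal_div_of_pos hlength]

theorem isUniform_norm_smul {E : Type*} [SeminormedAddCommGroup E] [NormedSpace ℝ E]
    {μ : Measure ℝ} {s : Set ℝ} {r : Ω → ℝ} {u : Ω → E} (hr : AEMeasurable r P)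
    (hs : MeasurableSet s) (hs_nonneg : ∀ t ∈ s, 0 ≤ t) (hunif : pdf.IsUniform r s P μ)
    (hu : ∀ᵐ ω ∂P, ‖u ω‖ = 1) :
    pdf.IsUniform (fun ω => ‖r ω • u ω‖) s P μ := by
  have hnorm : (fun ω => ‖r ω • u ω‖) =ᵐ[P] r := by
    filter_upwards [ae_mem_of_isUniform hr hs hunif, hu] with ω hrω huω
    rw [norm_smul, huω, mul_one, Real.norm_of_nonneg (hs_nonneg _ hrω)]
  exact (Measure.map_congr hnorm).trans hunif

end Uniform

section Sign

variable {lam t : ℝ}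

theorem cos_pi_mul_div_pos (hlam : 0 < lam) (ht : t ∈ Set.Ioo (-(lam / 2)) (lam / 2)) :
    0 < Real.cos (Real.pi * t / lam) := by
  apply Real.cos_pos_of_mem_Ioo
  constructor
  · rw [lt_div_iff₀ hlam]
    linear_combination Real.pi * ht.1
  · rw [div_lt_iff₀ hlam]
    linear_combination Real.pi * ht.2

theorem cos_pi_mul_div_neg (hlam : 0 < lam) (ht : t ∈ Set.Ioo (lam / 2) (3 * lam / 2)) :
    Real.cos (Real.pi * t / lam) < 0 := by
  apply Real.cos_neg_of_pi_div_two_lt_of_lt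
  · rw [lt_div_iff₀ hlam]
    linear_combination Real.pi * ht.1
  · rw [div_lt_iff₀ hlam]
    linear_combination Real.pi * ht.2

theorem sign_ne_sign_of_nonpos_of_pos_s15 {a b : ℝ} (ha : a ≤ 0) (hb : 0 < b) :
    Real.sign a ≠ Real.sign b := by
  rw [Real.sign_of_pos hb]
  rcases ha.lt_or_eq with ha | rfl
  · rw [Real.sign_of_neg ha]
    norm_num
  · rw [Real.sign_zero]
    norm_num

theorem exists_Ioo_forall_sign_ne_sign_cos (hlam : 0 < lam) (b : ℝ) :
    ∃ a, 0 ≤ a ∧ a + lam / 2 ≤ lam ∧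
      ∀ t ∈ Set.Ioo a (a + lam / 2), Real.sign b ≠ Real.sign (Real.cos (Real.pi * t / lam)) := by
  rcases lt_or_ge 0 b with hb | hb
  · refine ⟨lam / 2, by positivity, (add_halves lam).le, fun t ht => ?_⟩
    have hcos := cos_pi_mul_div_neg hlam ⟨ht.1, by linarith [ht.2]⟩
    exact (sign_ne_sign_of_nonpos_of_pos_s15 hcos.le hb).symm
  · refine ⟨0, le_rfl, by linarith, fun t ht => ?_⟩
    rw [zero_add] at ht
    have hcos := cos_pi_mul_div_pos hlam ⟨by linarith [ht.1], ht.2⟩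
    exact sign_ne_sign_of_nonpos_of_pos_s15 hb hcos

theorem half_le_measure_sign_ne_sign_cos {Ω : Type*} {mΩ : MeasurableSpace Ω} {P : Measure Ω}
    {X : Ω → ℝ} (hlam : 0 < lam) (hunif : pdf.IsUniform X (Set.Ioo 0 lam) P) (b : ℝ) :
    (1 / 2 : ℝ≥0∞) ≤ P {ω | Real.sign b ≠ Real.sign (Real.cos (Real.pi * X ω / lam))} := by
  obtain ⟨a, ha, halam, hsign⟩ := exists_Ioo_forall_sign_ne_sign_cos hlam b
  calc
    (1 / 2 : ℝ≥0∞) = ENNReal.ofReal ((a + lam / 2 - a) / (lam - 0)) := by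
      have hratio : (a + lam / 2 - a) / (lam - 0) = 1 / 2 := by
        rw [add_sub_cancel_left, sub_zero, div_right_comm, div_self hlam.ne']
      rw [hratio, ENNReal.ofReal_div_of_pos two_pos, ENNReal.ofReal_one, ENNReal.ofReal_ofNat]
    _ = P (X ⁻¹' Set.Ioo a (a + lam / 2)) :=
      (measure_preimage_Ioo_of_isUniform_Ioo hlam hunif ha halam).symm
    _ ≤ P {ω | Real.sign b ≠ Real.sign (Real.cos (Real.pi * X ω / lam))} :=
      measure_mono fun ω hω => hsign (X ω) hω

end Sign

section Network

variable {E ι : Type*} [SeminormedAddCommGroup E] [InnerProductSpace ℝ E] [Fintype ι]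

theorem sum_mul_max_inner_sub_eq_zero {lam : ℝ} {F : ι → E} {v : E} (hF : ∀ m, ‖F m‖ ≤ 1)
    (hv : ‖v‖ ≤ lam) (w : ι → ℝ) :
    ∑ m, w m * max (⟪F m, v⟫ - lam) 0 = 0 := by
  refine Finset.sum_eq_zero fun m _ => ?_
  have hinner : ⟪F m, v⟫ ≤ lam :=
    calc
      ⟪F m, v⟫ ≤ ‖F m‖ * ‖v‖ := real_inner_le_norm _ _
      _ ≤ ‖v‖ := mul_le_of_le_one_left (norm_nonneg v) (hF m)
      _ ≤ lam := hv
  rw [max_eq_right (sub_nonpos.2 hinner), mul_zero]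

theorem positive_threshold_network_constant_general {lam : ℝ} (hlam : 0 < lam)
    {Ω : Type*} {mΩ : MeasurableSpace Ω} {P : Measure Ω} {x : Ω → E}
    (hunif : pdf.IsUniform (fun ω => ‖x ω‖) (Set.Ioo 0 lam) P)
    {F : ι → E} (hF : ∀ m, ‖F m‖ ≤ 1) (w : ι → ℝ) (b : ℝ) :
    (∀ᵐ ω ∂P, ∑ m, w m * max (⟪F m, x ω⟫ - lam) 0 + b = b) ∧
      (1 / 2 : ℝ≥0∞) ≤
        P {ω | Real.sign (∑ m, w m * max (⟪F m, x ω⟫ - lam) 0 + b) ≠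
          Real.sign (Real.cos (Real.pi * ‖x ω‖ / lam))} := by
  have hmeas : AEMeasurable (fun ω => ‖x ω‖) P :=
    hunif.aemeasurable (by simpa using hlam) (by simp)
  have hconst : ∀ᵐ ω ∂P, ∑ m, w m * max (⟪F m, x ω⟫ - lam) 0 + b = b := by
    filter_upwards [ae_mem_of_isUniform hmeas measurableSet_Ioo hunif] with ω hω
    rw [sum_mul_max_inner_sub_eq_zero hF hω.2.le, zero_add]
  refine ⟨hconst, (half_le_measure_sign_ne_sign_cos hlam hunif b).trans (measure_mono_ae ?_)⟩
  filter_upwards [hconst] with ω hω (hne : Real.sign b ≠ _)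
  change Real.sign _ ≠ _
  rwa [hω]

end Network

/-- Positive-threshold case of the non-universality theorem.  Let `u` be
uniformly distributed on the unit sphere (its law is a probability measure on the sphere
invariant under every linear isometry of `ℝ^d`), let `r` be uniform on `(0, lam)` and
independent of `u`, and set `x = r • u`, `h(x) = cos(π ‖x‖ / lam)`.  Then every bias-free
two-layer network output `∑_m w_m max(⟨f_m, x⟩ − lam, 0) + b` with `‖f_m‖ ≤ 1` equals `b`
almost surely, and disagrees in sign with `h(x)` with probability at least `1/2`. -/
theorem positive_threshold_network_constant
    (lam : ℝ) (hlam : 0 < lam) (d : ℕ) (hd : 1 ≤ d)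
    {Ω : Type*} [MeasurableSpace Ω] (P : Measure Ω) [IsProbabilityMeasure P]
    (u : Ω → EuclideanSpace ℝ (Fin d)) (r : Ω → ℝ)
    (hu : Measurable u) (hr : Measurable r)
    (husphere : ∀ᵐ ω ∂P, ‖u ω‖ = 1)
    (huunif : ∀ g : EuclideanSpace ℝ (Fin d) ≃ₗᵢ[ℝ] EuclideanSpace ℝ (Fin d),
      Measure.map (fun ω => g (u ω)) P = Measure.map u P)
    (hrunif : Measure.map r P = (ENNReal.ofReal lam)⁻¹ • volume.restrict (Set.Ioo 0 lam))
    (hindep : ProbabilityTheory.IndepFun u r P)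
    (x : Ω → EuclideanSpace ℝ (Fin d)) (hx : ∀ ω, x ω = r ω • u ω)
    (h : EuclideanSpace ℝ (Fin d) → ℝ)
    (hh : ∀ v : EuclideanSpace ℝ (Fin d), h v = Real.cos (Real.pi * ‖v‖ / lam)) :
    ∀ p : ℕ, 1 ≤ p →
    ∀ F : Fin p → EuclideanSpace ℝ (Fin d), (∀ m, ‖F m‖ ≤ 1) →
    ∀ (w : Fin p → ℝ) (b : ℝ),
      (∀ᵐ ω ∂P, ∑ m, w m * max (⟪F m, x ω⟫ - lam) 0 + b = b) ∧
      (1 / 2 : ℝ≥0∞) ≤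
        P {ω | Real.sign (∑ m, w m * max (⟪F m, x ω⟫ - lam) 0 + b) ≠ Real.sign (h (x ω))} := by
  obtain rfl : x = fun ω => r ω • u ω := funext hx
  have hunif := isUniform_norm_smul hr.aemeasurable measurableSet_Ioo (fun _ ht => ht.1.le)
    (isUniform_Ioo_iff.2 (by rwa [sub_zero])) husphere
  simpa only [hh] using fun _ _ _ hF => positive_threshold_network_constant_general hlam hunif hF
end
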